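/- arXiv:2512.16632 — 2 statements merged into one kernel-verified Lean document; each statement's English description precedes it below -/
import Mathlib

section
/- Let S be a positive-definite n×n real matrix and D_1, D_2 arbitrary n×n real matrices. Suppose E_1, E_2 : (0, δ) → M_n(ℝ) satisfy E_i(h) = S h + D_i h² + o(h²) as h → 0⁺ (i = 1, 2). Then (1/h) · (log det E_1(h) − log det E_2(h)) → trace(S^{-1} (D_1 − D_2)) as h → 0⁺. -/
open Matrix Asymptotics Filter

attribute [local instance] Matrix.normedAddCommGroup Matrix.normedSpace

lemma det_diff_aux {n : ℕ} : Differentiable ℝ (fun M : Matrix (Fin n) (Fin n) ℝ => M.det) := by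
  simp only [Matrix.det_apply]
  refine Differentiable.fun_sum fun σ _ => ?_
  refine Differentiable.fun_const_smul (f := fun M : Matrix (Fin n) (Fin n) ℝ =>
    ∏ i, M (σ i) i) ?_ (Equiv.Perm.sign σ)
  have hent : ∀ i, Differentiable ℝ (fun M : Matrix (Fin n) (Fin n) ℝ => M (σ i) i) := fun i =>
    differentiable_pi.1 (differentiable_pi.1 differentiable_id (σ i)) i
  intro M
  exact (HasFDerivAt.finsetProd (u := Finset.univ)
    fun i _ => (hent i M).hasFDerivAt).differentiableAt

lemma det_deriv_aux {n : ℕ} (S D : Matrix (Fin n) (Fin n) ℝ) (hS : S.det ≠ 0) :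
    HasDerivAt (fun t : ℝ => (S + t • D).det) (S.det * Matrix.trace (S⁻¹ * D)) 0 := by
  have hu : IsUnit S.det := isUnit_iff_ne_zero.2 hS
  have e : (fun t : ℝ => (S + t • D).det) = fun t : ℝ => S.det *
      (1 + Matrix.trace (S⁻¹ * D) * t + (Matrix.det (1 + (Polynomial.X : Polynomial ℝ) •
        (S⁻¹ * D).map Polynomial.C)).divX.divX.eval t * t ^ 2) := by
    funext t
    rw [← Matrix.det_one_add_smul, ← Matrix.det_mul, Matrix.mul_add, Matrix.mul_smul,
      ← Matrix.mul_assoc, Matrix.mul_nonsing_inv _ hu, Matrix.mul_one, Matrix.one_mul]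
  rw [e]
  generalize (Matrix.det (1 + (Polynomial.X : Polynomial ℝ) •
        (S⁻¹ * D).map Polynomial.C)).divX.divX = p
  have h := ((((hasDerivAt_id (0:ℝ)).const_mul (Matrix.trace (S⁻¹ * D))).const_add 1).add
    ((p.hasDerivAt 0).mul ((hasDerivAt_id (0:ℝ)).pow 2))).const_mul S.det
  refine (h.congr_deriv ?_).congr_of_eventuallyEq (Filter.Eventually.of_forall fun t => ?_)
  · simp
  · simp

lemma logdet_half_aux {n : ℕ} (S D : Matrix (Fin n) (Fin n) ℝ) (hS : S.PosDef)
    (E : ℝ → Matrix (Fin n) (Fin n) ℝ)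
    (h₁ : (fun h : ℝ => E h - h • S - (h ^ 2) • D)
      =o[nhdsWithin 0 (Set.Ioi 0)] (fun h : ℝ => h ^ 2)) :
    Tendsto (fun h : ℝ => h⁻¹ * (Real.log (h⁻¹ • E h).det - Real.log S.det))
      (nhdsWithin 0 (Set.Ioi 0)) (nhds (Matrix.trace (S⁻¹ * D))) ∧
    ∀ᶠ h in nhdsWithin (0:ℝ) (Set.Ioi 0), (E h).det ≠ 0 := by
  have hd : S.det ≠ 0 := hS.det_pos.ne'
  have hpos : ∀ᶠ h in nhdsWithin (0:ℝ) (Set.Ioi 0), 0 < h := self_mem_nhdsWithin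
  have hid : Tendsto (fun h : ℝ => h) (nhdsWithin 0 (Set.Ioi 0)) (nhds 0) :=
    tendsto_id.mono_left nhdsWithin_le_nhds
  have hcd : Tendsto (fun h : ℝ => h⁻¹ • (h⁻¹ • E h - S)) (nhdsWithin 0 (Set.Ioi 0)) (nhds D) := by
    have h0 : Tendsto (fun h : ℝ => (h ^ 2)⁻¹ • (E h - h • S - (h ^ 2) • D))
        (nhdsWithin 0 (Set.Ioi 0)) (nhds 0) :=
      h₁.tendsto_inv_smul_nhds_zero
    have h1 := h0.add_const D
    rw [zero_add] at h1
    refine h1.congr' ?_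
    filter_upwards [hpos] with h hh
    have := hh.ne'
    ext i j
    simp
    field_simp
    ring
  have hdz : Tendsto (fun h : ℝ => h⁻¹ • E h) (nhdsWithin 0 (Set.Ioi 0)) (nhds S) := by
    have h1 := (hid.smul hcd).add_const S
    rw [zero_smul, zero_add] at h1
    refine h1.congr' ?_
    filter_upwards [hpos] with h hh
    rw [smul_inv_smul₀ hh.ne', sub_add_cancel]
  constructor
  · have hf : DifferentiableAt ℝ (fun M : Matrix (Fin n) (Fin n) ℝ => Real.log M.det) S :=
      (det_diff_aux S).log hd
    have hF := hf.hasFDerivAt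
    have hdz0 : Tendsto (fun h : ℝ => h⁻¹ • E h - S) (nhdsWithin 0 (Set.Ioi 0)) (nhds 0) := by
      have h1 := hdz.sub_const S
      rwa [sub_self] at h1
    have hl := (hF.hasFDerivWithinAt (s := Set.univ)).lim hdz0
      (Filter.Eventually.of_forall fun _ => Set.mem_univ _) hcd
    have hc : HasDerivAt (fun t : ℝ => S + t • D) D 0 := by
      have h1 := ((hasDerivAt_id (0:ℝ)).smul_const D).const_add S
      rw [one_smul] at h1
      exact h1
    have hS0 : S + (0:ℝ) • D = S := by rw [zero_smul, add_zero]
    have hF' : HasFDerivAt (fun M : Matrix (Fin n) (Fin n) ℝ => Real.log M.det)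
        (fderiv ℝ (fun M : Matrix (Fin n) (Fin n) ℝ => Real.log M.det) S) (S + (0:ℝ) • D) := by
      rw [hS0]; exact hF
    have d1 := hF'.comp_hasDerivAt (0:ℝ) hc
    have d2 := (det_deriv_aux S D hd).log (by rw [hS0]; exact hd)
    have key := d1.unique d2
    rw [hS0, mul_div_cancel_left₀ _ hd] at key
    refine le_trans (hl.congr fun h => ?_) (le_of_eq (congrArg nhds key))
    rw [add_sub_cancel, smul_eq_mul]
  · have := (det_diff_aux.continuous.tendsto S).comp hdz
    filter_upwards [this.eventually_ne hd] with h hh h0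
    apply hh
    simp only [Function.comp, Matrix.det_smul, h0, mul_zero]

/-- If `Eᵢ(h) = S h + Dᵢ h² + o(h²)` as `h → 0⁺` with `S` positive-definite, then
`(1/h)(log det E₁(h) − log det E₂(h)) → trace(S⁻¹ (D₁ − D₂))` as `h → 0⁺`. -/
theorem logdet_ratio_rate
    {n : ℕ} (S D₁ D₂ : Matrix (Fin n) (Fin n) ℝ) (hS : S.PosDef)
    (E₁ E₂ : ℝ → Matrix (Fin n) (Fin n) ℝ)
    (h₁ : (fun h : ℝ => E₁ h - h • S - (h ^ 2) • D₁)
      =o[nhdsWithin 0 (Set.Ioi 0)] (fun h : ℝ => h ^ 2))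
    (h₂ : (fun h : ℝ => E₂ h - h • S - (h ^ 2) • D₂)
      =o[nhdsWithin 0 (Set.Ioi 0)] (fun h : ℝ => h ^ 2)) :
    Tendsto (fun h : ℝ => (Real.log (E₁ h).det - Real.log (E₂ h).det) / h)
      (nhdsWithin 0 (Set.Ioi 0)) (nhds (Matrix.trace (S⁻¹ * (D₁ - D₂)))) := by
  obtain ⟨a1, b1⟩ := logdet_half_aux S D₁ hS E₁ h₁
  obtain ⟨a2, b2⟩ := logdet_half_aux S D₂ hS E₂ h₂
  have h := a1.sub a2
  rw [← Matrix.trace_sub, ← Matrix.mul_sub] at h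
  refine h.congr' ?_
  filter_upwards [b1, b2, self_mem_nhdsWithin] with h c1 c2 hh
  have hh' : (0:ℝ) < h := hh
  have hp : (h⁻¹ ^ n : ℝ) ≠ 0 := pow_ne_zero _ (inv_ne_zero hh'.ne')
  simp only [Matrix.det_smul, Fintype.card_fin]
  rw [Real.log_mul hp c1, Real.log_mul hp c2]
  ring
end

section
/- Let n = n1 + n2 + n3 and let A, Σ be n×n real matrices partitioned into 3×3 blocks with multi-index R = (1,2) (so A_RR is the top-left (n1+n2)×(n1+n2) block, A_R3 is (n1+n2)×n3, Σ_3R is n3×(n1+n2), etc.). Assume Σ is symmetric with Σ_RR invertible, and let P be a symmetric n3×n3 matrix satisfying the continuous-time algebraic Riccati equation A_33 P + P A_33^T + Σ_33 = (P A_R3^T + Σ_3R) Σ_RR^{-1} (P A_R3^T + Σ_3R)^T. Define K = (P A_R3^T + Σ_3R) Σ_RR^{-1}, D = (1/2)(A Σ + Σ A^T), and D^R = (1/2)((A_RR + A_R3 K) Σ_RR + Σ_RR (A_RR + A_R3 K)^T). Then D^R − D_RR = A_R3 P A_R3^T, and in particular the (1,1) blocks satisfy D^R_{11} − D_{11} =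 A_13 P A_13^T, so that trace(Σ_11^{-1}(D^R_{11} − D_{11})) = trace(Σ_11^{-1} A_13 P A_13^T). -/
open Matrix

/-- Algebraic core of the VOU Granger-causality rate formula: if `P` solves the CARE, then
with `K = (P A_R3ᵀ + Σ_3R) Σ_RR⁻¹`, `D = ½(AΣ + ΣAᵀ)` and
`Dᴿ = ½((A_RR + A_R3 K) Σ_RR + Σ_RR (A_RR + A_R3 K)ᵀ)` one has
`Dᴿ − D_RR = A_R3 P A_R3ᵀ`; in particular `Dᴿ₁₁ − D₁₁ = A₁₃ P A₁₃ᵀ` and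
`trace(Σ₁₁⁻¹ (Dᴿ₁₁ − D₁₁)) = trace(Σ₁₁⁻¹ A₁₃ P A₁₃ᵀ)`. -/
theorem care_reduced_D_identity
    {n1 n2 n3 : ℕ}
    (ARR : Matrix (Fin n1 ⊕ Fin n2) (Fin n1 ⊕ Fin n2) ℝ)
    (AR3 : Matrix (Fin n1 ⊕ Fin n2) (Fin n3) ℝ)
    (A3R : Matrix (Fin n3) (Fin n1 ⊕ Fin n2) ℝ)
    (A33 : Matrix (Fin n3) (Fin n3) ℝ)
    (SRR : Matrix (Fin n1 ⊕ Fin n2) (Fin n1 ⊕ Fin n2) ℝ)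
    (SR3 : Matrix (Fin n1 ⊕ Fin n2) (Fin n3) ℝ)
    (S3R : Matrix (Fin n3) (Fin n1 ⊕ Fin n2) ℝ)
    (S33 : Matrix (Fin n3) (Fin n3) ℝ)
    (A Sig : Matrix ((Fin n1 ⊕ Fin n2) ⊕ Fin n3) ((Fin n1 ⊕ Fin n2) ⊕ Fin n3) ℝ)
    (hA : A = Matrix.fromBlocks ARR AR3 A3R A33)
    (hSig : Sig = Matrix.fromBlocks SRR SR3 S3R S33)
    (hSsymm : Sig.IsSymm) (hSRR : IsUnit SRR.det)
    (P : Matrix (Fin n3) (Fin n3) ℝ) (hPsymm : Pᵀ = P)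
    (hCARE : A33 * P + P * A33ᵀ + S33
      = (P * AR3ᵀ + S3R) * SRR⁻¹ * (P * AR3ᵀ + S3R)ᵀ)
    (K : Matrix (Fin n3) (Fin n1 ⊕ Fin n2) ℝ)
    (hK : K = (P * AR3ᵀ + S3R) * SRR⁻¹)
    (D : Matrix ((Fin n1 ⊕ Fin n2) ⊕ Fin n3) ((Fin n1 ⊕ Fin n2) ⊕ Fin n3) ℝ)
    (hD : D = ((1 : ℝ) / 2) • (A * Sig + Sig * Aᵀ))
    (DR : Matrix (Fin n1 ⊕ Fin n2) (Fin n1 ⊕ Fin n2) ℝ)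
    (hDR : DR = ((1 : ℝ) / 2) • ((ARR + AR3 * K) * SRR + SRR * (ARR + AR3 * K)ᵀ))
    (A13 : Matrix (Fin n1) (Fin n3) ℝ) (hA13 : A13 = AR3.submatrix Sum.inl id)
    (S11 : Matrix (Fin n1) (Fin n1) ℝ) (hS11 : S11 = SRR.submatrix Sum.inl Sum.inl) :
    DR - D.toBlocks₁₁ = AR3 * P * AR3ᵀ ∧
    DR.submatrix Sum.inl Sum.inl - D.toBlocks₁₁.submatrix Sum.inl Sum.inl
      = A13 * P * A13ᵀ ∧
    Matrix.trace (S11⁻¹ *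
        (DR.submatrix Sum.inl Sum.inl - D.toBlocks₁₁.submatrix Sum.inl Sum.inl))
      = Matrix.trace (S11⁻¹ * (A13 * P * A13ᵀ)) := by
  have hS : Matrix.fromBlocks SRRᵀ S3Rᵀ SR3ᵀ S33ᵀ = Matrix.fromBlocks SRR SR3 S3R S33 := by
    have h := hSsymm.eq
    rw [hSig, Matrix.fromBlocks_transpose] at h
    exact h
  obtain ⟨h1, h2, -, -⟩ := Matrix.fromBlocks_inj.mp hS
  have hKS : K * SRR = P * AR3ᵀ + S3R := by
    rw [hK, Matrix.mul_assoc, Matrix.nonsing_inv_mul _ hSRR, Matrix.mul_one]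
  have hSK : SRR * Kᵀ = AR3 * P + SR3 := by
    have h := congrArg Matrix.transpose hKS
    rw [Matrix.transpose_mul, Matrix.transpose_add, Matrix.transpose_mul,
      Matrix.transpose_transpose, h1, h2, hPsymm] at h
    exact h
  have hD11 : D.toBlocks₁₁ = ((1 : ℝ) / 2) •
      ((ARR * SRR + AR3 * S3R) + (SRR * ARRᵀ + SR3 * AR3ᵀ)) := by
    rw [hD, hA, hSig, Matrix.fromBlocks_transpose, Matrix.fromBlocks_multiply,
      Matrix.fromBlocks_multiply, Matrix.fromBlocks_add, Matrix.fromBlocks_smul,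
      Matrix.toBlocks_fromBlocks₁₁]
  have main : DR - D.toBlocks₁₁ = AR3 * P * AR3ᵀ := by
    rw [hD11, hDR, Matrix.transpose_add, Matrix.transpose_mul, Matrix.add_mul, Matrix.mul_add,
      Matrix.mul_assoc AR3 K, hKS, ← Matrix.mul_assoc SRR Kᵀ, hSK, Matrix.mul_add,
      Matrix.add_mul, ← Matrix.mul_assoc]
    module
  have main1 : DR.submatrix Sum.inl Sum.inl - D.toBlocks₁₁.submatrix Sum.inl Sum.inl
      = A13 * P * A13ᵀ := by
    have h := congrArg (fun M => M.submatrix (Sum.inl : Fin n1 → Fin n1 ⊕ Fin n2)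
      (Sum.inl : Fin n1 → Fin n1 ⊕ Fin n2)) main
    rw [hA13]
    exact h
  exact ⟨main, main1, by rw [main1]⟩
end
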